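/- Let L > 0, let a : ℝ → ℝ be an L-periodic continuous function with magnetic flux α = (1/(2π))∫₀^L a(x)dx, α ∉ ℤ, and let k(α) be defined by: k(α) = 1/|sin(2πα)| if α mod 1 ∈ (0,1/4) ∪ (3/4,1), and k(α) = 1 if α mod 1 ∈ [1/4,3/4]. Then for every finite family ψ₁,…,ψ_N of L-periodic H¹ functions that is orthonormal in L²(0,L), setting ρ(x) = Σ_{n=1}^N |ψ_n(x)|², one has ∫₀^L ρ(x)³ dx ≤ k(α)² · Σ_{n=1}^N ∫₀^L |i ψ_n'(x) − a(x)ψ_n(x)|² dx. -/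

import Mathlib

open MeasureTheory Real Filter

/-- The constant `k(α)` from (K1): `1/|sin(2πα)|` when `α mod 1 ∈ (0,1/4)∪(3/4,1)`,
and `1` when `α mod 1 ∈ [1/4,3/4]`. -/
noncomputable def kConst (α : ℝ) : ℝ :=
  if 1/4 ≤ Int.fract α ∧ Int.fract α ≤ 3/4 then 1
  else 1 / |Real.sin (2 * Real.pi * α)|

/-- `F(b,α) = b^{5/3} Σ_{k∈ℤ} (|k+α|³+b)^{-2}`. -/
noncomputable def Fsum (α b : ℝ) : ℝ :=
  b ^ ((5:ℝ)/3) * ∑' k : ℤ, ((|(k : ℝ) + α| ^ 3 + b) ^ 2)⁻¹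

/-- `sup_{b ≥ 0} F(b,α)`. -/
noncomputable def supF (α : ℝ) : ℝ := ⨆ b : {x : ℝ // 0 ≤ x}, Fsum α b.1

/-- The constant `K₂(α)`. -/
noncomputable def K2 (α : ℝ) : ℝ :=
  5 / (3 * Real.sqrt 3 * Real.pi) * (supF α) ^ 2

/-- `K(α) = min(K₁(α), K₂(α))` with `K₁(α) = k(α)²`. -/
noncomputable def Kmin (α : ℝ) : ℝ := min ((kConst α) ^ 2) (K2 α)

/-! The gauge transform `v = e^{iθ} ψ` with `θ' = a` turns `|iψ' - aψ|` into `|v'|` and periodicity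
into the Bloch condition `v(x + L) = w v(x)` with `w = e^{2πiα}`. For `s > 0`, over the period
starting at `x`,
`∫ e^{s(y - x)} (v' + s v) dy = (e^{sL} w - 1) v(x)` and `∫ |v' + s v|² = ∫ |v'|² + s² ∫ |v|²`,
so Cauchy-Schwarz gives
`2 s |v(x)|² (cosh(sL) - Re w) ≤ sinh(sL) (∫ |v'|² + s² ∫ |v|²)`.
Since `sinh t ≤ k(α) (cosh t - cos 2πα)`, optimising over `s` yields the interpolation inequality
`|v(x)|⁴ ≤ k(α)² ∫ |v|² ∫ |v'|²`.

The passage to orthonormal families is the argument of Eden and Foias. Applied to the combination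
`y ↦ ∑ conj (vₙ(x)) vₙ(y)` at `y = x`, the inequality reads
`ρ(x)⁴ ≤ k(α)² ρ(x) ∫ |∑ conj (vₙ(x)) vₙ'(y)|² dy`. Dividing by `ρ(x)` and integrating in `x`, the
orthonormality of the coefficients collapses the right-hand side to `k(α)² ∑ ∫ |vₙ'|²`. -/

open scoped ComplexConjugate NNReal

section AbsoluteContinuity

variable {a b : ℝ}

lemma absolutelyContinuousOnInterval_comp_of_lipschitzWith {X Y : Type*} [PseudoMetricSpace X]
    [PseudoMetricSpace Y] {g : X → Y} {K : ℝ≥0} (hg : LipschitzWith K g) {f : ℝ → X}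
    (hf : AbsolutelyContinuousOnInterval f a b) :
    AbsolutelyContinuousOnInterval (fun x => g (f x)) a b := by
  have hK := Tendsto.const_mul (K : ℝ) hf
  rw [mul_zero] at hK
  refine squeeze_zero (fun _ => Finset.sum_nonneg fun _ _ => dist_nonneg) (fun I => ?_) hK
  rw [Finset.mul_sum]
  exact Finset.sum_le_sum fun i _ => hg.dist_le_mul _ _

lemma absolutelyContinuousOnInterval_finset_sum {E ι : Type*} [SeminormedAddCommGroup E]
    (s : Finset ι) {f : ι → ℝ → E} (hf : ∀ i ∈ s, AbsolutelyContinuousOnInterval (f i) a b) :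
    AbsolutelyContinuousOnInterval (∑ i ∈ s, f i) a b :=
  Finset.sum_induction f (AbsolutelyContinuousOnInterval · a b) (fun _ _ => .add)
    ((LipschitzWith.const 0).lipschitzOnWith.absolutelyContinuousOnInterval) hf

lemma intervalIntegrable_of_locallyIntegrable {E : Type*} [NormedAddCommGroup E] {f : ℝ → E}
    (hf : LocallyIntegrable f) : IntervalIntegrable f volume a b :=
  (hf.integrableOn_isCompact isCompact_uIcc).intervalIntegrable

lemma absolutelyContinuousOnInterval_intervalIntegral_of_locallyIntegrable {f : ℝ → ℝ}
    (hf : LocallyIntegrable f) (c : ℝ) :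
    AbsolutelyContinuousOnInterval (fun x => ∫ t in c..x, f t) a b := by
  have hint : IntervalIntegrable f volume (min c (min a b)) (max c (max a b)) :=
    intervalIntegrable_of_locallyIntegrable hf
  refine (hint.absolutelyContinuousOnInterval_intervalIntegral ?_).mono ?_
  · exact Set.Icc_subset_uIcc ⟨min_le_left _ _, le_max_left _ _⟩
  · exact (Set.Icc_subset_Icc (min_le_right _ _) (le_max_right _ _)).trans Set.Icc_subset_uIcc

/- Mathlib has the fundamental theorem for real-valued absolutely continuous functions; testing
against the dual lifts it to Banach spaces. -/
lemma integral_eq_sub_of_absolutelyContinuousOnInterval {E : Type*} [NormedAddCommGroup E]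
    [NormedSpace ℝ E] [CompleteSpace E] {f f' : ℝ → E}
    (hf : AbsolutelyContinuousOnInterval f a b) (hderiv : ∀ᵐ x, HasDerivAt f (f' x) x)
    (hint : IntervalIntegrable f' volume a b) : ∫ x in a..b, f' x = f b - f a := by
  rw [SeparatingDual.eq_iff_forall_dual_eq (R := ℝ)]
  intro φ
  have hφf := absolutelyContinuousOnInterval_comp_of_lipschitzWith φ.lipschitz hf
  rw [← φ.intervalIntegral_comp_comm hint, map_sub, ← hφf.integral_deriv_eq_sub]
  refine intervalIntegral.integral_congr_ae ?_
  filter_upwards [hderiv] with x hx _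
  exact (φ.hasFDerivAt.comp_hasDerivAt x hx).deriv.symm

lemma ae_differentiableAt_of_forall_absolutelyContinuousOnInterval {E : Type*}
    [NormedAddCommGroup E] [NormedSpace ℝ E] [FiniteDimensional ℝ E] {f : ℝ → E}
    (hf : ∀ a b, AbsolutelyContinuousOnInterval f a b) : ∀ᵐ x, DifferentiableAt ℝ f x := by
  have h : ∀ᵐ x, ∀ n : ℕ, x ∈ Set.uIcc (-n : ℝ) n → DifferentiableAt ℝ f x :=
    ae_all_iff.mpr fun n => (hf _ _).boundedVariationOn.ae_differentiableAt_of_mem_uIcc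
  filter_upwards [h] with x hx
  obtain ⟨n, hn⟩ := exists_nat_ge |x|
  exact hx n (Set.Icc_subset_uIcc (abs_le.mp hn))

end AbsoluteContinuity

section SquareIntegrable

variable {X : Type*} [MeasurableSpace X] {μ : Measure X} {𝕜 E ι : Type*} [RCLike 𝕜]

lemma norm_toLp_sq [NormedAddCommGroup E] {f : X → E} (hf : MemLp f 2 μ) :
    ‖hf.toLp f‖ ^ 2 = ∫ x, ‖f x‖ ^ 2 ∂μ := by
  rw [Lp.norm_toLp, hf.eLpNorm_eq_integral_rpow_norm two_ne_zero ENNReal.ofNat_ne_top,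
    ENNReal.toReal_ofReal (by positivity), ← Real.rpow_natCast, ← Real.rpow_mul (by positivity)]
  simp

lemma norm_integral_smul_sq_le [NormedAddCommGroup E] [NormedSpace 𝕜 E] [NormedSpace ℝ E]
    {g : X → 𝕜} {f : X → E} (hg : MemLp g 2 μ) (hf : MemLp f 2 μ) :
    ‖∫ x, g x • f x ∂μ‖ ^ 2 ≤ (∫ x, ‖g x‖ ^ 2 ∂μ) * ∫ x, ‖f x‖ ^ 2 ∂μ := by
  have holder : ∫ x, ‖g x‖ * ‖f x‖ ∂μ ≤
      √(∫ x, ‖g x‖ ^ 2 ∂μ) * √(∫ x, ‖f x‖ ^ 2 ∂μ) := by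
    simpa [Real.sqrt_eq_rpow] using
      integral_mul_le_Lp_mul_Lq_of_nonneg Real.HolderConjugate.two_two
        (.of_forall fun x => norm_nonneg (g x)) (.of_forall fun x => norm_nonneg (f x))
        (by simpa using hg.norm) (by simpa using hf.norm)
  calc ‖∫ x, g x • f x ∂μ‖ ^ 2
      ≤ (√(∫ x, ‖g x‖ ^ 2 ∂μ) * √(∫ x, ‖f x‖ ^ 2 ∂μ)) ^ 2 := by
        gcongr
        refine (norm_integral_le_integral_norm _).trans ?_
        simpa only [norm_smul] using holder
    _ = _ := by
        rw [mul_pow, Real.sq_sqrt (by positivity), Real.sq_sqrt (by positivity)]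

lemma ofReal_norm_sq_sum_smul [Fintype ι] [NormedAddCommGroup E] [InnerProductSpace 𝕜 E]
    (c : ι → 𝕜) (F : ι → E) :
    ((‖∑ n, c n • F n‖ ^ 2 : ℝ) : 𝕜) = ∑ n, ∑ m, conj (c n) * c m * inner 𝕜 (F n) (F m) := by
  rw [RCLike.ofReal_pow, ← inner_self_eq_norm_sq_to_K (𝕜 := 𝕜), sum_inner]
  refine Finset.sum_congr rfl fun n _ => ?_
  rw [inner_sum]
  refine Finset.sum_congr rfl fun m _ => ?_
  rw [inner_smul_left, inner_smul_right, mul_assoc]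

variable [Fintype ι] {ψ : ι → X → 𝕜} {H : Type*} [NormedAddCommGroup H]
  [InnerProductSpace 𝕜 H]

lemma integrable_norm_sq_sum_conj_smul [NormedAddCommGroup E] [NormedSpace 𝕜 E]
    (hψ : ∀ n, MemLp (ψ n) 2 μ) (F : ι → E) :
    Integrable (fun x => ‖∑ n, conj (ψ n x) • F n‖ ^ 2) μ := by
  refine MemLp.integrable_norm_pow (p := 2) (memLp_finsetSum _ fun n _ => ?_) two_ne_zero
  exact (ContinuousLinearMap.toSpanSingleton 𝕜 (F n)).comp_memLp' (hψ n).star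

variable [DecidableEq ι]

lemma integral_norm_sq_sum_conj_smul_of_orthonormal (hψ : ∀ n, MemLp (ψ n) 2 μ)
    (horth : ∀ n m, ∫ x, ψ n x * conj (ψ m x) ∂μ = if n = m then 1 else 0) (F : ι → H) :
    ∫ x, ‖∑ n, conj (ψ n x) • F n‖ ^ 2 ∂μ = ∑ n, ‖F n‖ ^ 2 := by
  have hint (n m : ι) : Integrable (fun x => ψ n x * conj (ψ m x)) μ :=
    (hψ n).integrable_mul (hψ m).star
  apply RCLike.ofReal_injective (K := 𝕜)
  rw [← integral_ofReal]
  simp only [ofReal_norm_sq_sum_smul, RCLike.conj_conj]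
  rw [integral_finsetSum _ fun n _ => integrable_finsetSum _ fun m _ => (hint n m).mul_const _]
  simp only [integral_finsetSum _ fun m _ => (hint _ m).mul_const _, integral_mul_const, horth,
    ite_mul, one_mul, zero_mul, Finset.sum_ite_eq, Finset.mem_univ, if_true,
    inner_self_eq_norm_sq_to_K, RCLike.ofReal_sum, RCLike.ofReal_pow]

lemma integral_norm_sq_sum_mul_of_orthonormal (hψ : ∀ n, MemLp (ψ n) 2 μ)
    (horth : ∀ n m, ∫ x, ψ n x * conj (ψ m x) ∂μ = if n = m then 1 else 0) (c : ι → 𝕜) :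
    ∫ x, ‖∑ n, c n * ψ n x‖ ^ 2 ∂μ = ∑ n, ‖c n‖ ^ 2 := by
  have h := integral_norm_sq_sum_conj_smul_of_orthonormal hψ horth (fun n => conj (c n))
  simp only [RCLike.norm_conj] at h
  rw [← h]
  congr! 3 with x
  rw [← RCLike.norm_conj]
  simp [map_sum, mul_comm]

theorem integral_sum_norm_sq_pow_three_le_of_norm_pow_four_le (hψ : ∀ n, MemLp (ψ n) 2 μ)
    (horth : ∀ n m, ∫ x, ψ n x * conj (ψ m x) ∂μ = if n = m then 1 else 0) (F : ι → H) {K : ℝ}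
    (hK : ∀ᵐ x ∂μ, ∀ c : ι → 𝕜,
      ‖∑ n, c n * ψ n x‖ ^ 4 ≤ K * ((∑ n, ‖c n‖ ^ 2) * ‖∑ n, c n • F n‖ ^ 2)) :
    ∫ x, (∑ n, ‖ψ n x‖ ^ 2) ^ 3 ∂μ ≤ K * ∑ n, ‖F n‖ ^ 2 := by
  rw [← integral_norm_sq_sum_conj_smul_of_orthonormal hψ horth F, ← integral_const_mul]
  refine integral_mono_of_nonneg (.of_forall fun x => by positivity)
    ((integrable_norm_sq_sum_conj_smul hψ F).const_mul K) ?_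
  filter_upwards [hK] with x hKx
  -- The extremal coefficients: `c n = conj (ψ n x)` maximises `|∑ c n * ψ n x|` on the unit sphere.
  have hx := hKx (fun n => conj (ψ n x))
  set ρ := ∑ n, ‖ψ n x‖ ^ 2 with hρ
  have hsum : ∑ n, conj (ψ n x) * ψ n x = (ρ : 𝕜) := by
    simp only [RCLike.conj_mul, hρ, RCLike.ofReal_sum, RCLike.ofReal_pow]
  have hρ0 : 0 ≤ ρ := by positivity
  simp only [hsum, RCLike.norm_conj, RCLike.norm_ofReal, abs_of_nonneg hρ0, ← hρ] at hx
  rcases hρ0.eq_or_lt with h0 | hpos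
  · have hψ0 (n : ι) : ψ n x = 0 := by
      have := (Finset.sum_eq_zero_iff_of_nonneg fun n _ => sq_nonneg ‖ψ n x‖).mp h0.symm n
      simpa using this
    simp [← h0, hψ0]
  · refine le_of_mul_le_mul_left ?_ hpos
    linarith

end SquareIntegrable

lemma memLp_two_restrict_Ioc_of_continuous {E : Type*} [NormedAddCommGroup E] {f : ℝ → E}
    (hf : Continuous f) {b c : ℝ} : MemLp f 2 (volume.restrict (Set.Ioc b c)) := by
  rw [memLp_two_iff_integrable_sq_norm hf.aestronglyMeasurable]
  exact (hf.norm.pow 2).integrableOn_Ioc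

lemma sq_le_mul_of_forall_pos_two_mul_le {a b c : ℝ} (ha : 0 ≤ a) (hb : 0 ≤ b) (hc : 0 ≤ c)
    (h : ∀ s, 0 < s → 2 * b * s ≤ a * s ^ 2 + c) : b ^ 2 ≤ a * c := by
  have hdiscrim := discrim_le_zero (a := a) (b := -(2 * b)) (c := c) fun s => by
    rcases lt_or_ge 0 s with hs | hs
    · linarith [h s hs]
    · nlinarith [mul_nonneg ha (mul_self_nonneg s), mul_nonneg hb (neg_nonneg.mpr hs)]
  rw [discrim] at hdiscrim
  linarith

lemma norm_exp_mul_sub_one_sq {w : ℂ} (hw : ‖w‖ = 1) (t : ℝ) :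
    ‖Complex.exp t * w - 1‖ ^ 2 = 2 * exp t * (cosh t - w.re) := by
  have hcosh : 2 * exp t * cosh t = exp t ^ 2 + 1 := by
    rw [cosh_eq, exp_neg]
    field_simp
  rw [← Complex.ofReal_exp, ← Complex.real_smul, norm_sub_sq_real, norm_smul, hw,
    Real.norm_of_nonneg (exp_pos t).le, inner_smul_left]
  simp only [mul_one, ringHom_apply, Complex.inner, one_mul, Complex.conj_re, norm_one, one_pow]
  linarith

lemma integral_norm_exp_mul_sub_sq {s : ℝ} (hs : s ≠ 0) (x L : ℝ) :
    ∫ y in x..(x + L), ‖Complex.exp (s * (y - x))‖ ^ 2 = exp (s * L) * sinh (s * L) / s := by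
  have hnorm (y : ℝ) : ‖Complex.exp (s * (y - x))‖ ^ 2 = exp (2 * s * (y - x)) := by
    rw [Complex.norm_exp, ← Real.exp_nat_mul]
    simp [mul_assoc]
  simp only [hnorm]
  rw [intervalIntegral.integral_comp_sub_right (fun y => exp (2 * s * y)),
    intervalIntegral.integral_comp_mul_left _ (by positivity), integral_exp, sinh_eq]
  have hexp : exp (2 * s * L) = exp (s * L) ^ 2 := by
    rw [← Real.exp_nat_mul]
    ring_nf
  simp only [sub_self, mul_zero, exp_zero, add_sub_cancel_left, hexp, exp_neg, smul_eq_mul]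
  field_simp

/-- Bloch functions: locally absolutely continuous functions that acquire the factor `w` over the
period `L` and whose derivative is square integrable over a period. For `‖w‖ = 1` this is the
form domain of `-d²/dx²` on `(0, L)` with quasi-periodic boundary condition `v(L) = w v(0)`. -/
structure IsBloch (L : ℝ) (w : ℂ) (v : ℝ → ℂ) : Prop where
  absolutelyContinuous : ∀ b c, AbsolutelyContinuousOnInterval v b c
  map_add_period : ∀ x, v (x + L) = w * v x
  memLp_deriv : MemLp (deriv v) 2 (volume.restrict (Set.Ioc 0 L))

namespace IsBloch

variable {L : ℝ} {w : ℂ} {v : ℝ → ℂ}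

lemma continuous (hv : IsBloch L w v) : Continuous v :=
  continuous_iff_continuousAt.mpr fun x =>
    ((hv.absolutelyContinuous (x - 1) (x + 1)).continuousOn).continuousAt
      (mem_of_superset (Icc_mem_nhds (by linarith) (by linarith)) Set.Icc_subset_uIcc)

lemma ae_hasDerivAt (hv : IsBloch L w v) : ∀ᵐ x, HasDerivAt v (deriv v x) x :=
  (ae_differentiableAt_of_forall_absolutelyContinuousOnInterval hv.absolutelyContinuous).mono
    fun _ hx => hx.hasDerivAt

lemma deriv_add_period (hv : IsBloch L w v) (x : ℝ) : deriv v (x + L) = w * deriv v x := by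
  rw [← deriv_comp_add_const, funext hv.map_add_period, deriv_const_mul_field]

lemma periodic_norm_sq (hv : IsBloch L w v) (hw : ‖w‖ = 1) :
    Function.Periodic (fun x => ‖v x‖ ^ 2) L := fun x => by
  simp only [hv.map_add_period, norm_mul, hw, one_mul]

lemma periodic_norm_deriv_sq (hv : IsBloch L w v) (hw : ‖w‖ = 1) :
    Function.Periodic (fun x => ‖deriv v x‖ ^ 2) L := fun x => by
  simp only [hv.deriv_add_period, norm_mul, hw, one_mul]

lemma ae_deriv_sum_const_mul {ι : Type*} [Fintype ι] {v : ι → ℝ → ℂ}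
    (hv : ∀ n, IsBloch L w (v n)) (c : ι → ℂ) :
    ∀ᵐ x, deriv (fun x => ∑ n, c n * v n x) x = ∑ n, c n * deriv (v n) x := by
  filter_upwards [ae_all_iff.mpr fun n => (hv n).ae_hasDerivAt] with x hx
  exact (HasDerivAt.fun_sum fun n _ => (hx n).const_mul (c n)).deriv

lemma sum_const_mul {ι : Type*} [Fintype ι] {v : ι → ℝ → ℂ} (hv : ∀ n, IsBloch L w (v n))
    (c : ι → ℂ) : IsBloch L w (fun x => ∑ n, c n * v n x) where
  absolutelyContinuous a b := by
    have h := absolutelyContinuousOnInterval_finset_sum Finset.univ fun n _ =>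
      ((hv n).absolutelyContinuous a b).const_smul (c n)
    simpa only [Finset.sum_fn, smul_eq_mul] using h
  map_add_period x := by
    simp only [(hv _).map_add_period, Finset.mul_sum, mul_left_comm]
  memLp_deriv := by
    refine (memLp_finsetSum Finset.univ fun n _ =>
      (hv n).memLp_deriv.const_mul (c n)).ae_eq (ae_restrict_of_ae ?_)
    filter_upwards [ae_deriv_sum_const_mul hv c] with x hx using hx.symm

lemma intervalIntegrable_norm_deriv_sq (hv : IsBloch L w v) (hL : 0 < L) (hw : ‖w‖ = 1)
    (b c : ℝ) : IntervalIntegrable (fun x => ‖deriv v x‖ ^ 2) volume b c := by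
  refine (hv.periodic_norm_deriv_sq hw).intervalIntegrable₀ hL.ne' ?_ b c
  rw [intervalIntegrable_iff_integrableOn_Ioc_of_le hL.le]
  exact hv.memLp_deriv.integrable_norm_pow two_ne_zero

lemma memLp_deriv_add_const_mul (hv : IsBloch L w v) (hL : 0 < L) (hw : ‖w‖ = 1) (s x : ℝ) :
    MemLp (fun y => deriv v y + s * v y) 2 (volume.restrict (Set.Ioc x (x + L))) := by
  have hLx : x ≤ x + L := by linarith
  refine MemLp.add ?_ ?_
  · rw [memLp_two_iff_integrable_sq_norm (measurable_deriv v).aestronglyMeasurable]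
    exact (intervalIntegrable_iff_integrableOn_Ioc_of_le hLx).mp
      (hv.intervalIntegrable_norm_deriv_sq hL hw _ _)
  · exact memLp_two_restrict_Ioc_of_continuous (by have := hv.continuous; fun_prop)

lemma integral_exp_mul_deriv_add_const_mul (hv : IsBloch L w v) (hL : 0 < L) (hw : ‖w‖ = 1)
    (s x : ℝ) :
    ∫ y in x..(x + L), Complex.exp (s * (y - x)) * (deriv v y + s * v y) =
      (Complex.exp (s * L) * w - 1) * v x := by
  have hexp (y : ℝ) : HasDerivAt (fun y : ℝ => Complex.exp (s * (y - x)))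
      (Complex.exp (s * (y - x)) * s) y := by
    simpa using (((hasDerivAt_id y).ofReal_comp.sub_const (x : ℂ)).const_mul (s : ℂ)).cexp
  have hsmooth : ContDiff ℝ 1 fun y : ℝ => Complex.exp (s * (y - x)) :=
    ((Complex.ofRealCLM.contDiff.sub contDiff_const).const_smul (s : ℂ)).cexp
  have hac : AbsolutelyContinuousOnInterval
      (fun y : ℝ => Complex.exp (s * (y - x)) * v y) x (x + L) :=
    hsmooth.contDiffOn.absolutelyContinuousOnInterval.fun_smul
      (hv.absolutelyContinuous x (x + L))
  have hderiv : ∀ᵐ y : ℝ, HasDerivAt (fun y : ℝ => Complex.exp (s * (y - x)) * v y)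
      (Complex.exp (s * (y - x)) * (deriv v y + s * v y)) y := by
    filter_upwards [hv.ae_hasDerivAt] with y hy
    exact ((hexp y).mul hy).congr_deriv (by ring)
  have hint : IntervalIntegrable
      (fun y : ℝ => Complex.exp (s * (y - x)) * (deriv v y + s * v y)) volume x (x + L) := by
    rw [intervalIntegrable_iff_integrableOn_Ioc_of_le (by linarith)]
    exact (memLp_two_restrict_Ioc_of_continuous hsmooth.continuous).integrable_mul
      (hv.memLp_deriv_add_const_mul hL hw s x)
  rw [integral_eq_sub_of_absolutelyContinuousOnInterval hac hderiv hint, hv.map_add_period]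
  simp [sub_mul, mul_assoc]

/- The cross term `2 s Re (conj v * v') = s (‖v‖²)'` integrates to zero over a period. -/
lemma integral_norm_deriv_add_const_mul_sq (hv : IsBloch L w v) (hL : 0 < L) (hw : ‖w‖ = 1)
    (s x : ℝ) :
    ∫ y in x..(x + L), ‖deriv v y + s * v y‖ ^ 2 =
      (∫ y in (0 : ℝ)..L, ‖deriv v y‖ ^ 2) + s ^ 2 * ∫ y in (0 : ℝ)..L, ‖v y‖ ^ 2 := by
  have hac : AbsolutelyContinuousOnInterval (fun y => ‖v y‖ ^ 2) x (x + L) := by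
    have h := absolutelyContinuousOnInterval_comp_of_lipschitzWith lipschitzWith_one_norm
      (hv.absolutelyContinuous x (x + L))
    simpa only [sq] using h.fun_mul h
  have hexpand : ∀ᵐ y, ‖deriv v y + s * v y‖ ^ 2 =
      ‖deriv v y‖ ^ 2 + s ^ 2 * ‖v y‖ ^ 2 + s * deriv (fun y => ‖v y‖ ^ 2) y := by
    filter_upwards [hv.ae_hasDerivAt] with y hy
    rw [hy.norm_sq.deriv, ← Complex.real_smul, norm_add_sq_real, inner_smul_right, norm_smul,
      mul_pow, Real.norm_eq_abs, sq_abs, real_inner_comm]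
    ring
  have hdint := hv.intervalIntegrable_norm_deriv_sq hL hw x (x + L)
  have hvint : IntervalIntegrable (fun y => s ^ 2 * ‖v y‖ ^ 2) volume x (x + L) :=
    (by have := hv.continuous; fun_prop : Continuous _).intervalIntegrable _ _
  rw [intervalIntegral.integral_congr_ae (hexpand.mono fun y hy _ => hy),
    intervalIntegral.integral_add (hdint.add hvint) (hac.intervalIntegrable_deriv.const_mul s),
    intervalIntegral.integral_add hdint hvint, intervalIntegral.integral_const_mul,
    intervalIntegral.integral_const_mul, hac.integral_deriv_eq_sub,
    (hv.periodic_norm_deriv_sq hw).intervalIntegral_add_eq x 0,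
    (hv.periodic_norm_sq hw).intervalIntegral_add_eq x 0, zero_add]
  have hbdry : ‖v (x + L)‖ ^ 2 = ‖v x‖ ^ 2 := hv.periodic_norm_sq hw x
  rw [hbdry, sub_self, mul_zero, add_zero]

lemma two_mul_norm_sq_mul_cosh_sub_re_le (hv : IsBloch L w v) (hL : 0 < L) (hw : ‖w‖ = 1)
    {s : ℝ} (hs : 0 < s) (x : ℝ) :
    2 * s * ‖v x‖ ^ 2 * (cosh (s * L) - w.re) ≤
      sinh (s * L) *
        ((∫ y in (0 : ℝ)..L, ‖deriv v y‖ ^ 2) + s ^ 2 * ∫ y in (0 : ℝ)..L, ‖v y‖ ^ 2) := by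
  have hLx : x ≤ x + L := by linarith
  have cauchySchwarz := norm_integral_smul_sq_le (𝕜 := ℂ)
    (memLp_two_restrict_Ioc_of_continuous
      (by fun_prop : Continuous fun y : ℝ => Complex.exp (s * (y - x))))
    (hv.memLp_deriv_add_const_mul hL hw s x)
  simp only [smul_eq_mul, ← intervalIntegral.integral_of_le hLx] at cauchySchwarz
  rw [hv.integral_exp_mul_deriv_add_const_mul hL hw, integral_norm_exp_mul_sub_sq hs.ne',
    hv.integral_norm_deriv_add_const_mul_sq hL hw, norm_mul, mul_pow,
    ← Complex.ofReal_mul, norm_exp_mul_sub_one_sq hw] at cauchySchwarz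
  refine le_of_mul_le_mul_left ?_ (div_pos (exp_pos (s * L)) hs)
  calc _ = 2 * exp (s * L) * (cosh (s * L) - w.re) * ‖v x‖ ^ 2 := by field_simp
    _ ≤ _ := cauchySchwarz
    _ = _ := by ring

theorem norm_pow_four_le (hv : IsBloch L w v) (hL : 0 < L) (hw : ‖w‖ = 1) {k : ℝ}
    (hk : ∀ t, 0 < t → sinh t ≤ k * (cosh t - w.re)) (x : ℝ) :
    ‖v x‖ ^ 4 ≤
      k ^ 2 * ((∫ y in (0 : ℝ)..L, ‖v y‖ ^ 2) * ∫ y in (0 : ℝ)..L, ‖deriv v y‖ ^ 2) := by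
  set A := ∫ y in (0 : ℝ)..L, ‖v y‖ ^ 2
  set B := ∫ y in (0 : ℝ)..L, ‖deriv v y‖ ^ 2
  have hA : 0 ≤ A := intervalIntegral.integral_nonneg hL.le fun y _ => by positivity
  have hB : 0 ≤ B := intervalIntegral.integral_nonneg hL.le fun y _ => by positivity
  have hgap {t : ℝ} (ht : 0 < t) : 0 < cosh t - w.re := by
    linarith [one_lt_cosh.mpr ht.ne', (Complex.re_le_norm w).trans_eq hw]
  have hk0 : 0 ≤ k :=
    (pos_of_mul_pos_left ((sinh_pos_iff.mpr one_pos).trans_le (hk 1 one_pos))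
      (hgap one_pos).le).le
  have hquad (s : ℝ) (hs : 0 < s) : 2 * ‖v x‖ ^ 2 * s ≤ k * A * s ^ 2 + k * B := by
    refine le_of_mul_le_mul_right ?_ (hgap (mul_pos hs hL))
    calc 2 * ‖v x‖ ^ 2 * s * (cosh (s * L) - w.re)
        = 2 * s * ‖v x‖ ^ 2 * (cosh (s * L) - w.re) := by ring
      _ ≤ sinh (s * L) * (B + s ^ 2 * A) :=
        hv.two_mul_norm_sq_mul_cosh_sub_re_le hL hw hs x
      _ ≤ k * (cosh (s * L) - w.re) * (B + s ^ 2 * A) := by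
        gcongr
        exact hk _ (mul_pos hs hL)
      _ = (k * A * s ^ 2 + k * B) * (cosh (s * L) - w.re) := by ring
  calc ‖v x‖ ^ 4 = (‖v x‖ ^ 2) ^ 2 := by ring
    _ ≤ k * A * (k * B) :=
      sq_le_mul_of_forall_pos_two_mul_le (by positivity) (by positivity) (by positivity) hquad
    _ = k ^ 2 * (A * B) := by ring

end IsBloch

section LiebThirring

variable {L : ℝ} {w : ℂ} {ι : Type*} [Fintype ι] {v : ι → ℝ → ℂ}

lemma norm_sum_smul_toLp_deriv_sq (hL : 0 ≤ L) (hv : ∀ n, IsBloch L w (v n)) (c : ι → ℂ) :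
    ‖∑ n, c n • (hv n).memLp_deriv.toLp‖ ^ 2 =
      ∫ y in (0 : ℝ)..L, ‖deriv (fun x => ∑ n, c n * v n x) y‖ ^ 2 := by
  rw [intervalIntegral.integral_of_le hL, ← norm_toLp_sq (IsBloch.sum_const_mul hv c).memLp_deriv]
  congr 2
  refine Lp.ext ?_
  filter_upwards [(IsBloch.sum_const_mul hv c).memLp_deriv.coeFn_toLp,
    Lp.coeFn_fun_finsetSum Finset.univ fun n => c n • (hv n).memLp_deriv.toLp,
    ae_all_iff.mpr fun n => Lp.coeFn_smul (c n) (hv n).memLp_deriv.toLp,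
    ae_all_iff.mpr fun n => (hv n).memLp_deriv.coeFn_toLp,
    ae_restrict_of_ae (IsBloch.ae_deriv_sum_const_mul hv c)] with x hlhs hsum hsmul hrhs hderiv
  simp only [hlhs, hsum, hsmul, hrhs, hderiv, Pi.smul_apply, smul_eq_mul]

theorem integral_sum_norm_sq_pow_three_le_of_isBloch [DecidableEq ι] (hL : 0 < L) (hw : ‖w‖ = 1)
    (hv : ∀ n, IsBloch L w (v n))
    (horth : ∀ n m, ∫ x in (0 : ℝ)..L, v n x * conj (v m x) = if n = m then 1 else 0) {k : ℝ}
    (hk : ∀ t, 0 < t → sinh t ≤ k * (cosh t - w.re)) :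
    ∫ x in (0 : ℝ)..L, (∑ n, ‖v n x‖ ^ 2) ^ 3 ≤
      k ^ 2 * ∑ n, ∫ x in (0 : ℝ)..L, ‖deriv (v n) x‖ ^ 2 := by
  have hmem (n : ι) := memLp_two_restrict_Ioc_of_continuous (hv n).continuous (b := 0) (c := L)
  simp only [intervalIntegral.integral_of_le hL.le] at horth ⊢
  simp only [← norm_toLp_sq (hv _).memLp_deriv]
  refine integral_sum_norm_sq_pow_three_le_of_norm_pow_four_le hmem horth _
    (.of_forall fun x c => ?_)
  rw [norm_sum_smul_toLp_deriv_sq hL.le hv, ← integral_norm_sq_sum_mul_of_orthonormal hmem horth,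
    ← intervalIntegral.integral_of_le hL.le]
  exact (IsBloch.sum_const_mul hv c).norm_pow_four_le hL hw hk x

end LiebThirring

section TrigonometricGap

lemma sinh_mul_abs_sin_le (t φ : ℝ) : sinh t * |sin φ| ≤ cosh t - cos φ := by
  have hsq : (sinh t * |sin φ| + cos φ) ^ 2 ≤ cosh t ^ 2 := by
    nlinarith [sq_nonneg (sinh t * cos φ - |sin φ|), cosh_sq t, sin_sq_add_cos_sq φ,
      sq_abs (sin φ)]
  linarith [(abs_le.mp (abs_le_of_sq_le_sq hsq (cosh_pos t).le)).2]

lemma cos_two_pi_mul_nonpos {α : ℝ} (h₁ : 1 / 4 ≤ Int.fract α) (h₂ : Int.fract α ≤ 3 / 4) :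
    cos (2 * π * α) ≤ 0 := by
  have hfract : cos (2 * π * α) = cos (2 * π * Int.fract α) := by
    rw [← cos_sub_int_mul_two_pi _ ⌊α⌋, Int.fract]
    ring_nf
  rw [hfract]
  apply cos_nonpos_of_pi_div_two_le_of_le <;> nlinarith [pi_pos]

lemma sin_two_pi_mul_eq_zero_iff {α : ℝ} : sin (2 * π * α) = 0 ↔ ∃ n : ℤ, 2 * α = n := by
  rw [sin_eq_zero_iff]
  refine exists_congr fun n => ?_
  rw [mul_right_comm, mul_left_inj' pi_ne_zero, eq_comm]

lemma fract_eq_half_of_two_mul_eq_intCast {α : ℝ} (hα : ∀ m : ℤ, α ≠ m) {n : ℤ}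
    (hn : 2 * α = n) : Int.fract α = 1 / 2 := by
  rcases Int.even_or_odd' n with ⟨m, rfl | rfl⟩ <;> push_cast at hn
  · exact absurd (by linarith) (hα m)
  · exact Int.fract_eq_iff.mpr ⟨by norm_num, by norm_num, m, by linarith⟩

lemma sinh_le_kConst_mul {α : ℝ} (hα : ∀ m : ℤ, α ≠ m) (t : ℝ) :
    sinh t ≤ kConst α * (cosh t - cos (2 * π * α)) := by
  rw [kConst]
  split_ifs with hmid
  · linarith [sinh_lt_cosh t, cos_two_pi_mul_nonpos hmid.1 hmid.2]
  · have hsin : sin (2 * π * α) ≠ 0 := fun h0 => by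
      obtain ⟨n, hn⟩ := sin_two_pi_mul_eq_zero_iff.mp h0
      rw [fract_eq_half_of_two_mul_eq_intCast hα hn] at hmid
      norm_num at hmid
    rw [one_div, inv_mul_eq_div, le_div_iff₀ (abs_pos.mpr hsin)]
    exact sinh_mul_abs_sin_le t _

end TrigonometricGap

/-- The gauge transform `e^{iθ} ψ` with `θ(x) = ∫₀ˣ a`, which removes the magnetic potential `a`
from the operator `ψ ↦ iψ' - aψ`, turning it into `v ↦ iv'` up to the phase. -/
noncomputable def gaugeTransform (a : ℝ → ℝ) (ψ : ℝ → ℂ) (x : ℝ) : ℂ :=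
  Complex.exp (Complex.I * (∫ t in (0 : ℝ)..x, a t : ℝ)) * ψ x

section Gauge

variable {a : ℝ → ℝ} {ψ : ℝ → ℂ}

lemma norm_gaugeTransform (a : ℝ → ℝ) (ψ : ℝ → ℂ) (x : ℝ) : ‖gaugeTransform a ψ x‖ = ‖ψ x‖ := by
  rw [gaugeTransform, norm_mul, Complex.norm_exp_I_mul_ofReal, one_mul]

lemma gaugeTransform_mul_conj_gaugeTransform (a : ℝ → ℝ) (ψ φ : ℝ → ℂ) (x : ℝ) :
    gaugeTransform a ψ x * conj (gaugeTransform a φ x) = ψ x * conj (φ x) := by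
  rw [gaugeTransform, gaugeTransform, map_mul, mul_mul_mul_comm, Complex.mul_conj',
    Complex.norm_exp_I_mul_ofReal]
  simp

lemma absolutelyContinuousOnInterval_gaugeTransform (ha : LocallyIntegrable a) {b c : ℝ}
    (hψ : AbsolutelyContinuousOnInterval ψ b c) :
    AbsolutelyContinuousOnInterval (gaugeTransform a ψ) b c := by
  have hlip : LipschitzWith 1 fun t : ℝ => Complex.exp (Complex.I * t) := by
    refine lipschitzWith_of_nnnorm_deriv_le (by fun_prop) fun t => ?_
    have hderiv : HasDerivAt (fun t : ℝ => Complex.exp (Complex.I * t))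
        (Complex.exp (Complex.I * t) * Complex.I) t := by
      simpa using ((hasDerivAt_id t).ofReal_comp.const_mul Complex.I).cexp
    rw [hderiv.deriv, ← NNReal.coe_le_coe]
    simp
  exact (absolutelyContinuousOnInterval_comp_of_lipschitzWith hlip
    (absolutelyContinuousOnInterval_intervalIntegral_of_locallyIntegrable ha 0)).fun_smul hψ

lemma ae_norm_deriv_gaugeTransform (ha : LocallyIntegrable a) (hψ : ∀ᵐ x, DifferentiableAt ℝ ψ x) :
    ∀ᵐ x, ‖deriv (gaugeTransform a ψ) x‖ = ‖Complex.I * deriv ψ x - a x * ψ x‖ := by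
  filter_upwards [LocallyIntegrable.ae_hasDerivAt_integral ha, hψ] with x hax hψx
  have hderiv : HasDerivAt (gaugeTransform a ψ) (-Complex.I *
      gaugeTransform a (fun x => Complex.I * deriv ψ x - a x * ψ x) x) x := by
    refine ((((hax 0).ofReal_comp.const_mul Complex.I).cexp).mul hψx.hasDerivAt).congr_deriv ?_
    rw [gaugeTransform]
    linear_combination
      Complex.exp (Complex.I * (∫ t in (0 : ℝ)..x, a t : ℝ)) * deriv ψ x * Complex.I_sq
  rw [hderiv.deriv, norm_mul, norm_neg, Complex.norm_I, one_mul, norm_gaugeTransform]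

lemma gaugeTransform_add_period {L α : ℝ} (ha : LocallyIntegrable a) (haP : Function.Periodic a L)
    (hα : α = 1 / (2 * π) * ∫ x in (0 : ℝ)..L, a x) (hψP : Function.Periodic ψ L) (x : ℝ) :
    gaugeTransform a ψ (x + L) = Complex.exp (2 * π * α * Complex.I) * gaugeTransform a ψ x := by
  have hflux : ∫ t in (0 : ℝ)..L, a t = 2 * π * α := by
    rw [hα]
    field_simp
  have hphase : ∫ t in (0 : ℝ)..(x + L), a t = (∫ t in (0 : ℝ)..x, a t) + 2 * π * α := by
    rw [haP.intervalIntegral_add_eq_add 0 x fun _ _ => intervalIntegrable_of_locallyIntegrable ha,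
      zero_add, hflux]
  rw [gaugeTransform, gaugeTransform, hphase, hψP, ← mul_assoc, ← Complex.exp_add]
  push_cast
  ring_nf

theorem isBloch_gaugeTransform {L α : ℝ} (ha : LocallyIntegrable a) (haP : Function.Periodic a L)
    (hα : α = 1 / (2 * π) * ∫ x in (0 : ℝ)..L, a x)
    (hψ : ∀ b c, AbsolutelyContinuousOnInterval ψ b c) (hψP : Function.Periodic ψ L)
    (hmem : MemLp (fun x => Complex.I * deriv ψ x - a x * ψ x) 2
      (volume.restrict (Set.Ioc 0 L))) :
    IsBloch L (Complex.exp (2 * π * α * Complex.I)) (gaugeTransform a ψ) where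
  absolutelyContinuous b c := absolutelyContinuousOnInterval_gaugeTransform ha (hψ b c)
  map_add_period := gaugeTransform_add_period ha haP hα hψP
  memLp_deriv := by
    refine hmem.congr_norm (measurable_deriv _).aestronglyMeasurable (ae_restrict_of_ae ?_)
    filter_upwards [ae_norm_deriv_gaugeTransform ha
      (ae_differentiableAt_of_forall_absolutelyContinuousOnInterval hψ)] with x hx using hx.symm

lemma continuous_I_mul_deriv_sub_mul (ha : Continuous a) (hψ : ContDiff ℝ 1 ψ) :
    Continuous fun x => Complex.I * deriv ψ x - a x * ψ x := by
  have := hψ.continuous_deriv_one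
  have := hψ.continuous
  fun_prop

end Gauge

theorem lieb_thirring_orthonormal_K1_general {L : ℝ} (hL : 0 < L) {a : ℝ → ℝ}
    (ha : LocallyIntegrable a) (haP : Function.Periodic a L) {α : ℝ}
    (hα : α = 1 / (2 * π) * ∫ x in (0 : ℝ)..L, a x) (hαZ : ∀ m : ℤ, α ≠ m)
    {ι : Type*} [Fintype ι] [DecidableEq ι] {ψ : ι → ℝ → ℂ}
    (hψ : ∀ n b c, AbsolutelyContinuousOnInterval (ψ n) b c)
    (hψP : ∀ n, Function.Periodic (ψ n) L)
    (hmem : ∀ n, MemLp (fun x => Complex.I * deriv (ψ n) x - a x * ψ n x) 2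
      (volume.restrict (Set.Ioc 0 L)))
    (horth : ∀ n m, ∫ x in (0 : ℝ)..L, ψ n x * conj (ψ m x) = if n = m then 1 else 0) :
    ∫ x in (0 : ℝ)..L, (∑ n, ‖ψ n x‖ ^ 2) ^ 3 ≤
      kConst α ^ 2 *
        ∑ n, ∫ x in (0 : ℝ)..L, ‖Complex.I * deriv (ψ n) x - a x * ψ n x‖ ^ 2 := by
  have hw : ‖Complex.exp (2 * π * α * Complex.I)‖ = 1 := by
    exact_mod_cast Complex.norm_exp_ofReal_mul_I (2 * π * α)
  have hre : (Complex.exp (2 * π * α * Complex.I)).re = cos (2 * π * α) := by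
    exact_mod_cast Complex.exp_ofReal_mul_I_re (2 * π * α)
  have hbloch (n : ι) := isBloch_gaugeTransform ha haP hα (hψ n) (hψP n) (hmem n)
  have henergy (n : ι) : ∫ x in (0 : ℝ)..L, ‖deriv (gaugeTransform a (ψ n)) x‖ ^ 2 =
      ∫ x in (0 : ℝ)..L, ‖Complex.I * deriv (ψ n) x - a x * ψ n x‖ ^ 2 := by
    refine intervalIntegral.integral_congr_ae ?_
    filter_upwards [ae_norm_deriv_gaugeTransform ha
      (ae_differentiableAt_of_forall_absolutelyContinuousOnInterval (hψ n))] with x hx _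
    rw [hx]
  have key := integral_sum_norm_sq_pow_three_le_of_isBloch hL hw hbloch
    (by simpa only [gaugeTransform_mul_conj_gaugeTransform] using horth)
    fun t _ => hre ▸ sinh_le_kConst_mul hαZ t
  simpa only [norm_gaugeTransform, henergy] using key

/-- scalar Lieb–Thirring inequality for orthonormal systems, constant `k(α)²`. -/
theorem lieb_thirring_orthonormal_K1
    (L : ℝ) (hL : 0 < L)
    (a : ℝ → ℝ) (ha : Continuous a) (haP : Function.Periodic a L)
    (α : ℝ) (hα : α = (1 / (2 * Real.pi)) * ∫ x in (0:ℝ)..L, a x)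
    (hαZ : ∀ m : ℤ, α ≠ (m : ℝ))
    (N : ℕ) (ψ : Fin N → ℝ → ℂ)
    (hψ : ∀ n, ContDiff ℝ 1 (ψ n))
    (hψP : ∀ n, Function.Periodic (ψ n) L)
    (horth : ∀ n m, ∫ x in (0:ℝ)..L, ψ n x * (starRingEnd ℂ) (ψ m x) =
      if n = m then 1 else 0) :
    ∫ x in (0:ℝ)..L, (∑ n, ‖ψ n x‖ ^ 2) ^ 3 ≤
      kConst α ^ 2 *
        ∑ n, ∫ x in (0:ℝ)..L, ‖Complex.I * deriv (ψ n) x - (a x : ℂ) * ψ n x‖ ^ 2 := by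
  exact lieb_thirring_orthonormal_K1_general hL ha.locallyIntegrable haP hα hαZ
    (fun n _ _ => (hψ n).contDiffOn.absolutelyContinuousOnInterval) hψP (fun n =>
      memLp_two_restrict_Ioc_of_continuous (continuous_I_mul_deriv_sub_mul ha (hψ n))) horth
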